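/- Assume Z(S)* is finite and nonempty. Let C be the set of vertices of Γ(S) whose eccentricity equals the radius of Γ(S) (the vertex set of the center of Γ(S)). Then C ∪ {0} is an ideal of S. -/

import Mathlib

/-- A commutative semigroup with a zero element. -/
class CommSemigroupWithZero (S : Type*) extends SemigroupWithZero S where
  mul_comm : ∀ a b : S, a * b = b * a

variable (S : Type*) [CommSemigroupWithZero S]

/-- The set of zero-divisors of `S`. -/
def zdivs : Set S := {x | ∃ y, y ≠ 0 ∧ x * y = 0}

/-- The vertex set `Z(S)* = Z(S) \ {0}` of the zero-divisor graph. -/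
def zdVerts : Set S := {x | x ≠ 0 ∧ x ∈ zdivs S}

/-- The zero-divisor graph `Γ(S)`. -/
def zdGraph : SimpleGraph (zdVerts S) where
  Adj x y := x ≠ y ∧ (x : S) * y = 0
  symm := by
    constructor
    rintro x y ⟨hne, h⟩
    exact ⟨hne.symm, by rw [CommSemigroupWithZero.mul_comm]; exact h⟩
  loopless := ⟨fun x h => h.1 rfl⟩

/-- `I` is an ideal of the semigroup `S`. -/
def IsIdeal (I : Set S) : Prop := I.Nonempty ∧ ∀ x ∈ I, ∀ s : S, x * s ∈ I

/-- `p` is a prime ideal of the semigroup `S`. -/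
def IsPrimeIdeal (p : Set S) : Prop :=
  IsIdeal S p ∧ ∀ x y : S, (∀ s : S, x * s * y ∈ p) → x ∈ p ∨ y ∈ p

/-- `x` is nilpotent: `x ^ (n + 1) = 0` for some `n`. -/
def IsNil (x : S) : Prop := ∃ n : ℕ, (fun y => x * y)^[n] x = 0

/-- The annihilator of `a`. -/
def Ann (a : S) : Set S := {s | s * a = 0}

/-- The set of associated primes of `S`. -/
def Ass : Set (Set S) := {p | IsPrimeIdeal S p ∧ ∃ x : S, p = Ann S x}

/-!
Multiplying a vertex `a` by `s` can only enlarge its annihilator, so if `a * s ≠ 0`, every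
neighbour of `a` in the zero-divisor graph is equal or adjacent to `a * s`. A walk from `a` to a
vertex other than `a` can therefore be restarted at `a * s` without becoming longer, while the
distance from `a * s` to `a` is at most the eccentricity of `a` by symmetry. So multiplication
never increases eccentricity.
-/

section Graph

variable {V : Type*} {G : SimpleGraph V} {u v w : V}

theorem edist_le_edist_of_neighborSet_subset
    (h : G.neighborSet u ⊆ insert v (G.neighborSet v)) (hw : u ≠ w) :
    G.edist v w ≤ G.edist u w := by
  by_cases htop : G.edist u w = ⊤
  · exact htop ▸ le_top
  obtain ⟨p, hp⟩ := G.exists_walk_of_edist_ne_top htop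
  rw [← hp]
  cases p with
  | nil => exact absurd rfl hw
  | cons hadj q =>
    rcases h hadj with rfl | hadj'
    · exact (SimpleGraph.edist_le q).trans
        (Nat.cast_le.mpr (SimpleGraph.Walk.length_cons hadj q ▸ Nat.le_succ _))
    · exact SimpleGraph.edist_le (SimpleGraph.Walk.cons hadj' q)

theorem eccent_le_eccent_of_neighborSet_subset
    (h : G.neighborSet u ⊆ insert v (G.neighborSet v)) : G.eccent v ≤ G.eccent u := by
  refine (G.eccent_le_iff v _).mpr fun w ↦ ?_
  obtain rfl | hw := eq_or_ne u w
  · exact G.edist_comm.trans_le SimpleGraph.edist_le_eccent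
  · exact (edist_le_edist_of_neighborSet_subset h hw).trans SimpleGraph.edist_le_eccent

theorem mem_center_iff_forall_eccent_le : u ∈ G.center ↔ ∀ v, G.eccent u ≤ G.eccent v :=
  SimpleGraph.radius_le_eccent.ge_iff_eq'.symm.trans le_iInf_iff

theorem eccent_eq_sup_dist_of_preconnected [Fintype V] (hG : G.Preconnected) (u : V) :
    G.eccent u = (Finset.univ.sup fun v ↦ G.dist u v : ℕ) := by
  refine le_antisymm ((G.eccent_le_iff u _).mpr fun v ↦ ?_) ?_
  · rw [← (hG u v).coe_dist_eq_edist]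
    exact Nat.cast_le.mpr (Finset.le_sup (f := G.dist u) (Finset.mem_univ v))
  · rw [Finset.apply_sup_eq_sup_comp_of_linearOrder (Nat.cast : ℕ → ℕ∞) Nat.mono_cast rfl]
    refine Finset.sup_le fun v _ ↦ ?_
    exact (hG u v).coe_dist_eq_edist.trans_le SimpleGraph.edist_le_eccent

end Graph

instance CommSemigroupWithZero.toCommSemigroup : CommSemigroup S where
  mul_comm := CommSemigroupWithZero.mul_comm

section ZeroDivisorGraph

variable {S}

theorem ann_subset_ann_mul (a s : S) : Ann S a ⊆ Ann S (a * s) := by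
  intro t (ht : t * a = 0)
  change t * (a * s) = 0
  rw [← mul_assoc, ht, zero_mul]

theorem mul_mem_zdVerts {a s : S} (ha : a ∈ zdVerts S) (has : a * s ≠ 0) :
    a * s ∈ zdVerts S := by
  obtain ⟨-, y, hy, hay⟩ := ha
  exact ⟨has, y, hy, by rw [mul_right_comm, hay, zero_mul]⟩

theorem eccent_le_eccent_of_ann_subset {a b : zdVerts S} (h : Ann S (a : S) ⊆ Ann S (b : S)) :
    (zdGraph S).eccent b ≤ (zdGraph S).eccent a := by
  refine eccent_le_eccent_of_neighborSet_subset fun w hw ↦ ?_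
  have hbw : (b : S) * w = 0 := (mul_comm _ _).trans (h ((mul_comm _ _).trans hw.2))
  exact or_iff_not_imp_left.mpr fun hne ↦ ⟨Ne.symm hne, hbw⟩

theorem reachable_of_mul_eq_zero {x y : zdVerts S} (h : (x : S) * y = 0) :
    (zdGraph S).Reachable x y := by
  obtain rfl | hxy := eq_or_ne x y
  · rfl
  · exact SimpleGraph.Adj.reachable ⟨hxy, h⟩

theorem reachable_of_mul_eq_zero_of_mul_eq_zero {x y : zdVerts S} {w : S} (hw : w ≠ 0)
    (hxw : (x : S) * w = 0) (hwy : w * y = 0) : (zdGraph S).Reachable x y :=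
  have hw' : w ∈ zdVerts S := ⟨hw, y, y.2.1, hwy⟩
  (reachable_of_mul_eq_zero (y := ⟨w, hw'⟩) hxw).trans (reachable_of_mul_eq_zero hwy)

variable (S)

theorem zdGraph_preconnected : (zdGraph S).Preconnected := by
  intro x y
  obtain ⟨-, a, ha, hxa⟩ := x.2
  obtain ⟨-, b, hb, hyb⟩ := y.2
  by_cases hab : a * b = 0
  · have ha' : a ∈ zdVerts S := ⟨ha, b, hb, hab⟩
    have hxa' : (zdGraph S).Reachable x ⟨a, ha'⟩ := reachable_of_mul_eq_zero hxa
    exact hxa'.trans (reachable_of_mul_eq_zero_of_mul_eq_zero hb hab ((mul_comm _ _).trans hyb))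
  · refine reachable_of_mul_eq_zero_of_mul_eq_zero hab ?_ ?_
    · rw [← mul_assoc, hxa, zero_mul]
    · rw [mul_assoc, mul_comm b, hyb, mul_zero]

theorem image_center_zdGraph [Fintype (zdVerts S)] :
    (↑) '' (zdGraph S).center = {a : S | ∃ ha : a ∈ zdVerts S, ∀ u : zdVerts S,
      (Finset.univ.sup fun z : zdVerts S ↦ (zdGraph S).dist ⟨a, ha⟩ z) ≤
        Finset.univ.sup fun z : zdVerts S ↦ (zdGraph S).dist u z} := by
  ext a
  simp only [Set.mem_image, Subtype.exists, exists_and_right, exists_eq_right,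
    mem_center_iff_forall_eccent_le, Set.mem_ofPred_eq, Nat.cast_le,
    eccent_eq_sup_dist_of_preconnected (zdGraph_preconnected S)]

theorem center_union_zero_isIdeal_general :
    IsIdeal S ((↑) '' (zdGraph S).center ∪ {0}) := by
  refine ⟨⟨0, Or.inr rfl⟩, ?_⟩
  rintro _ (⟨a, ha, rfl⟩ | rfl) s
  · by_cases has : (a : S) * s = 0
    · exact Or.inr has
    · let b : zdVerts S := ⟨a * s, mul_mem_zdVerts a.2 has⟩
      have hba : (zdGraph S).eccent b ≤ (zdGraph S).eccent a :=
        eccent_le_eccent_of_ann_subset (ann_subset_ann_mul (a : S) s)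
      refine Or.inl ⟨b, mem_center_iff_forall_eccent_le.mpr fun u ↦ ?_, rfl⟩
      exact hba.trans (mem_center_iff_forall_eccent_le.mp ha u)
  · exact Or.inr (zero_mul s)

end ZeroDivisorGraph

/-- If `Z(S)*` is finite and nonempty, then the vertex set of the
center of `Γ(S)` (the vertices whose eccentricity equals the radius, i.e. the vertices
of minimum eccentricity), together with `0`, is an ideal of `S`. -/
theorem center_union_zero_isIdeal [Fintype (zdVerts S)] (hne : (zdVerts S).Nonempty) :
    IsIdeal S
      ({a : S | ∃ ha : a ∈ zdVerts S, ∀ u : zdVerts S,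
          (Finset.univ.sup fun z : zdVerts S => (zdGraph S).dist ⟨a, ha⟩ z) ≤
            Finset.univ.sup fun z : zdVerts S => (zdGraph S).dist u z} ∪ {0}) :=
  image_center_zdGraph S ▸ center_union_zero_isIdeal_general S
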